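/- arXiv:1308.0429 — 2 statements merged into one kernel-verified Lean document; each statement's English description precedes it below -/
import Mathlib

section
/- Let A be a separable C*-algebra such that every element of A is a norm limit of invertible elements of the unitization Ã. Let G be a finite group and let α and β be actions of G on A. Assume: (1) for every g ∈ G, the automorphisms α_g and β_g are approximately unitarily equivalent, i.e. for every finite set F₁ ⊆ A and δ > 0 there is a unitary u in the multiplier algebra M(A) with ‖u·β_g(y)·u* − α_g(y)‖ < δ for all y ∈ F₁; and (2) both α and β admit Rohlin sequences: for each g ∈ G there are sequences (f_{g,n})_{n∈ℕ} and (f'_{g,n})_{n∈ℕ} of positive contractions in A such that for all a ∈ A and all g, h ∈ G one has lim_n ‖f_{g,n}·a − a·f_{g,n}‖ = 0, lim_n ‖f_{g,n}·f_{h,n}·a‖ = 0 whenever g ≠ h, lim_n ‖(f_{g,n}² − f_{g,n})·a‖ = 0, lim_n ‖(Σ_{k∈G} f_{k,n})·a − a‖ = 0 and lim_n ‖(α_g(f_{h,n}) − f_{gh,n})·a‖ = 0, and the same conditions hold for (f'_{g,n}) with β in place of α. Then there exists a *-automorphism θ of A which is approximately inner (for every finite set F ⊆ A and ε > 0 there is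 a unitary u ∈ M(A) with ‖θ(a) − u·a·u*‖ < ε for all a ∈ F) and satisfies θ ∘ α_g ∘ θ⁻¹ = β_g for every g ∈ G. (Theorem 3.5 of the paper, with the Rohlin property of α and β expressed by representative sequences of the Rohlin projections in the central sequence algebra F(A), and with the consequence of 'almost stable rank one' that is used in the proof, namely A ⊆ closure(GL(Ã)), taken as hypothesis.) -/
open scoped MultiplierAlgebra
open Filter Topology

namespace DoubleCentralizer

variable {A : Type*} [NonUnitalCStarAlgebra A]

theorem coe_injective : Function.Injective (DoubleCentralizer.coe ℂ : A → 𝓜(ℂ, A)) := by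
  intro a b hab
  have h : ∀ x : A, (a - b) * x = 0 := fun x ↦ by
    have := congrArg (fun m : 𝓜(ℂ, A) ↦ m.fst x) hab
    simpa [sub_mul, sub_eq_zero] using this
  exact sub_eq_zero.mp (CStarRing.mul_star_self_eq_zero_iff _ |>.mp (h _))

theorem norm_coe (a : A) : ‖(a : 𝓜(ℂ, A))‖ = ‖a‖ :=
  NonUnitalStarAlgHom.norm_map (coeHom : A →⋆ₙₐ[ℂ] 𝓜(ℂ, A)) coe_injective a

theorem fst_mul (m : 𝓜(ℂ, A)) (a b : A) : m.fst (a * b) = m.fst a * b := by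
  have h : ∀ x : A, x * (m.fst (a * b) - m.fst a * b) = 0 := fun x ↦ by
    rw [mul_sub, ← m.central, ← mul_assoc, ← mul_assoc, m.central, sub_self]
  exact sub_eq_zero.mp (CStarRing.star_mul_self_eq_zero_iff _ |>.mp (h _))

theorem snd_mul (m : 𝓜(ℂ, A)) (a b : A) : m.snd (a * b) = a * m.snd b := by
  have h : ∀ x : A, (m.snd (a * b) - a * m.snd b) * x = 0 := fun x ↦ by
    rw [sub_mul, m.central, mul_assoc, mul_assoc, m.central, sub_self]
  exact sub_eq_zero.mp (CStarRing.mul_star_self_eq_zero_iff _ |>.mp (h _))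

theorem coe_fst_apply (m : 𝓜(ℂ, A)) (a : A) : ((m.fst a : A) : 𝓜(ℂ, A)) = m * a := by
  refine ext _ _ _ _ <| Prod.ext ?_ ?_
  · ext x
    simp [fst_mul]
  · ext x
    simp [m.central]

theorem coe_snd_apply (m : 𝓜(ℂ, A)) (a : A) : ((m.snd a : A) : 𝓜(ℂ, A)) = a * m := by
  refine ext _ _ _ _ <| Prod.ext ?_ ?_
  · ext x
    simp [m.central]
  · ext x
    simp [snd_mul]

theorem coe_mul (a b : A) : ((a * b : A) : 𝓜(ℂ, A)) = a * b :=
  map_mul (coeHom : A →⋆ₙₐ[ℂ] 𝓜(ℂ, A)) a b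

theorem coe_sub (a b : A) : ((a - b : A) : 𝓜(ℂ, A)) = a - b :=
  map_sub (coeHom : A →⋆ₙₐ[ℂ] 𝓜(ℂ, A)) a b

theorem coe_star (a : A) : ((star a : A) : 𝓜(ℂ, A)) = star (a : 𝓜(ℂ, A)) :=
  map_star (coeHom : A →⋆ₙₐ[ℂ] 𝓜(ℂ, A)) a

/-- The inner automorphism `a ↦ u * a * star u` of `A` given by a unitary multiplier `u`. -/
noncomputable def innerAut : unitary 𝓜(ℂ, A) →* (A ≃⋆ₐ[ℂ] A) where
  toFun u :=
    { toFun := fun a ↦ (star (u : 𝓜(ℂ, A))).snd ((u : 𝓜(ℂ, A)).fst a)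
      invFun := fun a ↦ (u : 𝓜(ℂ, A)).snd ((star (u : 𝓜(ℂ, A))).fst a)
      left_inv := fun a ↦ coe_injective <| by
        simp only [coe_snd_apply, coe_fst_apply, mul_assoc, Unitary.coe_star_mul_self, mul_one]
        simp only [← mul_assoc, Unitary.coe_star_mul_self, one_mul]
      right_inv := fun a ↦ coe_injective <| by
        have h := Unitary.mul_star_self_of_mem u.2
        simp only [coe_snd_apply, coe_fst_apply, mul_assoc, h, mul_one]
        simp only [← mul_assoc, h, one_mul]
      map_mul' := fun a b ↦ coe_injective <| by
        simp only [coe_snd_apply, coe_fst_apply, coe_mul]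
        calc (u : 𝓜(ℂ, A)) * (a * b) * star (u : 𝓜(ℂ, A))
            = u * a * 1 * b * star (u : 𝓜(ℂ, A)) := by simp only [mul_assoc, one_mul]
          _ = _ := by rw [← Unitary.coe_star_mul_self u]; simp only [mul_assoc]
      map_add' := fun a b ↦ by simp only [map_add]
      map_star' := fun a ↦ coe_injective <| by
        simp only [coe_snd_apply, coe_fst_apply, coe_star, star_mul, star_star, mul_assoc]
      map_smul' := fun c a ↦ by simp only [map_smul] }
  map_one' := by
    ext a
    exact coe_injective <| by simp
  map_mul' u v := by
    ext a
    refine coe_injective ?_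
    change (((star (u * v : 𝓜(ℂ, A))).snd ((u * v : 𝓜(ℂ, A)).fst a) : A) : 𝓜(ℂ, A)) =
      (((star (u : 𝓜(ℂ, A))).snd ((u : 𝓜(ℂ, A)).fst
        ((star (v : 𝓜(ℂ, A))).snd ((v : 𝓜(ℂ, A)).fst a))) : A) : 𝓜(ℂ, A))
    simp only [coe_snd_apply, coe_fst_apply, star_mul, mul_assoc]

theorem innerAut_apply (u : unitary 𝓜(ℂ, A)) (a : A) :
    innerAut u a = (star (u : 𝓜(ℂ, A))).snd ((u : 𝓜(ℂ, A)).fst a) :=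
  rfl

theorem coe_innerAut (u : unitary 𝓜(ℂ, A)) (a : A) :
    ((innerAut u a : A) : 𝓜(ℂ, A)) = u * a * star (u : 𝓜(ℂ, A)) := by
  rw [innerAut_apply, coe_snd_apply, coe_fst_apply]

/-- An automorphism of `A` as a continuous linear map. -/
def autToCLM (γ : A ≃⋆ₐ[ℂ] A) : A →L[ℂ] A :=
  ⟨(γ : A →ₗ[ℂ] A), (StarAlgEquiv.isometry γ).continuous⟩

theorem autToCLM_apply (γ : A ≃⋆ₐ[ℂ] A) (a : A) : autToCLM γ a = γ a := rfl

/-- The automorphism of the multiplier algebra induced by an automorphism of `A`, applied to a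
multiplier. -/
noncomputable def conjAut (γ : A ≃⋆ₐ[ℂ] A) (m : 𝓜(ℂ, A)) : 𝓜(ℂ, A) where
  fst := (autToCLM γ).comp (m.fst.comp (autToCLM γ.symm))
  snd := (autToCLM γ).comp (m.snd.comp (autToCLM γ.symm))
  central x y := by
    simpa [autToCLM_apply] using congrArg γ (m.central (γ.symm x) (γ.symm y))

theorem conjAut_fst (γ : A ≃⋆ₐ[ℂ] A) (m : 𝓜(ℂ, A)) (a : A) :
    (conjAut γ m).fst a = γ (m.fst (γ.symm a)) := rfl

theorem conjAut_snd (γ : A ≃⋆ₐ[ℂ] A) (m : 𝓜(ℂ, A)) (a : A) :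
    (conjAut γ m).snd a = γ (m.snd (γ.symm a)) := rfl

theorem conjAut_mul (γ : A ≃⋆ₐ[ℂ] A) (m n : 𝓜(ℂ, A)) :
    conjAut γ (m * n) = conjAut γ m * conjAut γ n := by
  refine ext _ _ _ _ <| Prod.ext ?_ ?_ <;> ext x <;> simp [conjAut_fst, conjAut_snd]

theorem conjAut_one (γ : A ≃⋆ₐ[ℂ] A) : conjAut γ (1 : 𝓜(ℂ, A)) = 1 := by
  refine ext _ _ _ _ <| Prod.ext ?_ ?_ <;> ext x <;> simp [conjAut_fst, conjAut_snd]

theorem conjAut_star (γ : A ≃⋆ₐ[ℂ] A) (m : 𝓜(ℂ, A)) :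
    conjAut γ (star m) = star (conjAut γ m) := by
  refine ext _ _ _ _ <| Prod.ext ?_ ?_ <;> ext x <;>
    simp [conjAut_fst, conjAut_snd, star_fst, star_snd, map_star]

instance innerAut_range_normal : (innerAut (A := A)).range.Normal where
  conj_mem := by
    rintro _ ⟨u, rfl⟩ γ
    refine ⟨⟨conjAut γ u, Unitary.mem_iff.mpr ⟨?_, ?_⟩⟩, ?_⟩
    · rw [← conjAut_star, ← conjAut_mul, Unitary.coe_star_mul_self, conjAut_one]
    · rw [← conjAut_star, ← conjAut_mul, Unitary.mul_star_self_of_mem u.2, conjAut_one]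
    · ext a
      simp [innerAut_apply, StarAlgEquiv.aut_inv, ← conjAut_star, conjAut_fst, conjAut_snd]

end DoubleCentralizer

section NullSequences

variable {R : Type*} [NormedRing R] {x y : ℕ → R} {C : ℝ}

theorem tendsto_zero_mul_of_norm_le (hx : Tendsto x atTop (𝓝 0)) (hy : ∀ n, ‖y n‖ ≤ C) :
    Tendsto (fun n ↦ x n * y n) atTop (𝓝 0) :=
  hx.zero_mul_isBoundedUnder_le (isBoundedUnder_of ⟨C, hy⟩)

theorem tendsto_mul_zero_of_norm_le (hy : ∀ n, ‖y n‖ ≤ C) (hx : Tendsto x atTop (𝓝 0)) :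
    Tendsto (fun n ↦ y n * x n) atTop (𝓝 0) :=
  isBoundedUnder_le_mul_tendsto_zero (isBoundedUnder_of ⟨C, hy⟩) hx

end NullSequences

section CStarAlgebra

variable {M : Type*} [CStarAlgebra M]

theorem norm_le_one_of_mem_unitary {v : M} (hv : v ∈ unitary M) : ‖v‖ ≤ 1 := by
  rcases subsingleton_or_nontrivial M with _ | _
  · simp [Subsingleton.elim v 0]
  · exact (CStarRing.norm_of_mem_unitary hv).le

section Order

variable [PartialOrder M] [StarOrderedRing M]

theorem exists_unitary_mul_abs_eq {x : M} (hx : IsUnit x) :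
    ∃ v ∈ unitary M, v * CFC.abs x = x := by
  have habs : IsUnit (CFC.abs x) := by
    have h := hx.star.mul hx
    rw [← CFC.abs_mul_abs] at h
    exact (Commute.isUnit_mul_iff (.refl _)).mp h |>.1
  obtain ⟨h, hh⟩ := habs
  have hself : star (h : M) = h := by rw [hh]; exact (CFC.abs_nonneg x).isSelfAdjoint
  have hselfinv : star (↑h⁻¹ : M) = ↑h⁻¹ := by
    rw [← Units.coe_star_inv, show star h = h from Units.ext hself]
  have hleft : star (x * ↑h⁻¹) * (x * ↑h⁻¹) = 1 := by
    calc star (x * ↑h⁻¹) * (x * ↑h⁻¹) = ↑h⁻¹ * (star x * x) * ↑h⁻¹ := by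
          rw [star_mul, hselfinv]; simp only [mul_assoc]
      _ = 1 := by rw [← CFC.abs_mul_abs, ← hh]; simp
  have hunit : IsUnit (x * ↑h⁻¹) := hx.mul h⁻¹.isUnit
  refine ⟨x * ↑h⁻¹, Unitary.mem_iff.mpr ⟨hleft, ?_⟩, ?_⟩
  · obtain ⟨y, hy⟩ := hunit
    rw [← hy] at hleft ⊢
    rw [Units.eq_inv_of_mul_eq_one_right hleft, Units.mul_inv]
  · rw [← hh, mul_assoc, Units.inv_mul, mul_one]

theorem norm_le_norm_add_one_mul {h : M} (hh : 0 ≤ h) (z : M) : ‖z‖ ≤ ‖(h + 1) * z‖ := by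
  have hle : (1 : M) ≤ star (h + 1) * (h + 1) := by
    have hs : star h = h := hh.isSelfAdjoint
    have h2 : 0 ≤ star h * h := star_mul_self_nonneg h
    have : star (h + 1) * (h + 1) = 1 + (star h * h + (h + h)) := by
      rw [star_add, star_one, hs]; noncomm_ring
    rw [this]
    exact le_add_of_nonneg_right (add_nonneg h2 (add_nonneg hh hh))
  have hconj := star_left_conjugate_le_conjugate hle z
  have hnorm := CStarAlgebra.norm_le_norm_of_nonneg_of_le (a := star z * 1 * z)
    (by simp) hconj
  have heq : star z * (star (h + 1) * (h + 1)) * z = star ((h + 1) * z) * ((h + 1) * z) := by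
    rw [star_mul]; simp only [mul_assoc]
  rw [heq, mul_one, CStarRing.norm_star_mul_self, CStarRing.norm_star_mul_self] at hnorm
  exact (mul_self_le_mul_self_iff (norm_nonneg _) (norm_nonneg _)).mpr hnorm

theorem norm_abs_mul_sub_le (x d : M) : ‖CFC.abs x * d - d‖ ≤ ‖star x * x * d - d‖ := by
  refine (norm_le_norm_add_one_mul (CFC.abs_nonneg x) _).trans_eq (congrArg _ ?_)
  rw [← CFC.abs_mul_abs]
  noncomm_ring

end Order

/-- If a bounded sequence of limits of invertible elements acts asymptotically as an isometry,
then it is asymptotically a sequence of unitaries. -/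
theorem exists_unitary_tendsto_mul_sub {w : ℕ → M} {C : ℝ} (hC : ∀ n, ‖w n‖ ≤ C)
    (hw : ∀ n, w n ∈ closure {x : M | IsUnit x}) :
    ∃ v : ℕ → unitary M, ∀ d : M,
      Tendsto (fun n ↦ star (w n) * w n * d - d) atTop (𝓝 0) →
        Tendsto (fun n ↦ (v n - w n) * d) atTop (𝓝 0) := by
  let _ : PartialOrder M := CStarAlgebra.spectralOrder M
  have : StarOrderedRing M := CStarAlgebra.spectralOrderedRing M
  have hx : ∀ n, ∃ x : M, IsUnit x ∧ ‖w n - x‖ < 1 / ((n : ℝ) + 1) := fun n ↦ by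
    obtain ⟨x, hx, hd⟩ := Metric.mem_closure_iff.mp (hw n) _ (Nat.one_div_pos_of_nat (n := n))
    exact ⟨x, hx, by rwa [dist_eq_norm] at hd⟩
  choose x hxu hxw using hx
  choose v hv hvx using fun n ↦ exists_unitary_mul_abs_eq (hxu n)
  refine ⟨fun n ↦ ⟨v n, hv n⟩, fun d hd ↦ ?_⟩
  have hnull : Tendsto (fun n ↦ x n - w n) atTop (𝓝 0) := by
    refine squeeze_zero_norm (fun n ↦ ?_) (tendsto_one_div_add_atTop_nhds_zero_nat (𝕜 := ℝ))
    rw [norm_sub_rev]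
    exact (hxw n).le
  have hxC : ∀ n, ‖star (x n)‖ ≤ C + 1 := fun n ↦ by
    have h1 : (1 : ℝ) / ((n : ℝ) + 1) ≤ 1 := by
      rw [div_le_one (by positivity)]; linarith [n.cast_nonneg (α := ℝ)]
    have h2 := norm_sub_le (w n) (w n - x n)
    rw [sub_sub_cancel] at h2
    rw [norm_star]
    linarith [hC n, hxw n]
  have hnull' : Tendsto (fun n ↦ star (x n - w n)) atTop (𝓝 0) := by
    simpa using hnull.star
  have hxd : Tendsto (fun n ↦ star (x n) * x n * d - d) atTop (𝓝 0) := by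
    have h1 := (tendsto_mul_zero_of_norm_le hxC hnull).mul_const d
    have h2 := (tendsto_zero_mul_of_norm_le hnull' hC).mul_const d
    have h3 := (h1.add h2).add hd
    simp only [zero_mul, add_zero] at h3
    refine h3.congr fun n ↦ ?_
    rw [star_sub]
    noncomm_ring
  have habs : Tendsto (fun n ↦ CFC.abs (x n) * d - d) atTop (𝓝 0) :=
    squeeze_zero_norm (fun n ↦ norm_abs_mul_sub_le (x n) d)
      (tendsto_zero_iff_norm_tendsto_zero.mp hxd)
  have h1 := tendsto_mul_zero_of_norm_le (C := 1) (y := v)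
    (fun n ↦ norm_le_one_of_mem_unitary (hv n)) habs
  have h2 := (hnull.mul_const d).sub h1
  rw [zero_mul, sub_zero] at h2
  refine h2.congr fun n ↦ ?_
  rw [mul_sub, ← mul_assoc, hvx]
  noncomm_ring

end CStarAlgebra

section RohlinUnitary

variable {M G : Type*} [CStarAlgebra M] [Fintype G] {S : Set M} {f : G → ℕ → M}

theorem tendsto_star_mul_self_of_rohlin [DecidableEq G]
    (hl : ∀ m, ∀ d ∈ S, m * d ∈ S)
    (hnorm : ∀ k n, ‖f k n‖ ≤ 1)
    (hcent : ∀ d ∈ S, ∀ k, Tendsto (fun n ↦ f k n * d - d * f k n) atTop (𝓝 0))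
    (hproj : ∀ d ∈ S, ∀ j k,
      Tendsto (fun n ↦ f j n * f k n * d - if j = k then f k n * d else 0) atTop (𝓝 0))
    (hself : ∀ k n, star (f k n) = f k n)
    (hsum : ∀ d ∈ S, Tendsto (fun n ↦ ∑ k, f k n * d - d) atTop (𝓝 0))
    (u : G → unitary M) {d : M} (hd : d ∈ S) :
    Tendsto (fun n ↦ star (∑ k, u k * f k n) * (∑ k, u k * f k n) * d - d) atTop (𝓝 0) := by
  have hterm : ∀ j k, Tendsto (fun n ↦ f j n * (star (u j : M) * u k) * f k n * d -
      if j = k then f k n * d else 0) atTop (𝓝 0) := fun j k ↦ by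
    set b : M := star (u j : M) * u k with hb
    have h1 := ((hcent d hd k).const_mul b).sub (hcent (b * d) (hl b d hd) k)
    rw [mul_zero, sub_zero] at h1
    have h2 := (tendsto_mul_zero_of_norm_le (hnorm j) h1).add (hproj (b * d) (hl b d hd) j k)
    rw [add_zero] at h2
    refine h2.congr fun n ↦ ?_
    split_ifs with hjk
    · subst hjk
      rw [Unitary.coe_star_mul_self] at hb
      rw [hb]
      noncomm_ring
    · noncomm_ring
  have h := (tendsto_finsetSum Finset.univ fun j _ ↦
    tendsto_finsetSum Finset.univ fun k _ ↦ hterm j k).add (hsum d hd)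
  simp only [Finset.sum_const_zero, add_zero, Finset.sum_sub_distrib, Finset.sum_ite_eq,
    Finset.mem_univ, if_true, sub_add_sub_cancel] at h
  refine h.congr fun n ↦ ?_
  rw [star_sum, Finset.sum_mul_sum]
  simp only [star_mul, hself, Finset.sum_mul]
  simp only [mul_assoc]

theorem tendsto_unitary_mul_rohlin [DecidableEq G]
    (hnorm : ∀ k n, ‖f k n‖ ≤ 1)
    (hcent : ∀ d ∈ S, ∀ k, Tendsto (fun n ↦ f k n * d - d * f k n) atTop (𝓝 0))
    (hproj : ∀ d ∈ S, ∀ j k,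
      Tendsto (fun n ↦ f j n * f k n * d - if j = k then f k n * d else 0) atTop (𝓝 0))
    {u : G → M} {v : ℕ → M} (hv : ∀ n, ‖v n‖ ≤ 1)
    {C : ℝ} (hC : ∀ n, ‖∑ k, u k * f k n‖ ≤ C)
    (hvw : ∀ d ∈ S, Tendsto (fun n ↦ (v n - ∑ k, u k * f k n) * d) atTop (𝓝 0))
    {d : M} (hd : d ∈ S) (k : G) :
    Tendsto (fun n ↦ v n * (f k n * d) - u k * (f k n * d)) atTop (𝓝 0) := by
  have h1 := tendsto_mul_zero_of_norm_le hv (hcent d hd k)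
  have h2 := tendsto_zero_mul_of_norm_le (hvw d hd) (hnorm k)
  have h3 := tendsto_mul_zero_of_norm_le hC (hcent d hd k)
  have h4 := tendsto_finsetSum Finset.univ fun j _ ↦ (hproj d hd j k).const_mul (u j)
  simp only [mul_zero, Finset.sum_const_zero, mul_sub, mul_ite, Finset.sum_sub_distrib,
    Finset.sum_ite_eq', Finset.mem_univ, if_true] at h4
  have h := ((h1.add h2).sub h3).add h4
  simp only [add_zero, sub_zero] at h
  refine h.congr fun n ↦ ?_
  have hw : ∑ j, u j * (f j n * f k n * d) = (∑ j, u j * f j n) * (f k n * d) := by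
    rw [Finset.sum_mul]; simp only [mul_assoc]
  rw [hw]
  noncomm_ring

/-- Given a Rohlin tower `f` of projections which are central modulo the annihilator of an ideal
`S`, unitaries `u k` can be glued along `f` to a sequence of unitaries. -/
theorem exists_unitary_tendsto_conj_rohlin [DecidableEq G]
    (hl : ∀ m, ∀ d ∈ S, m * d ∈ S) (hr : ∀ m, ∀ d ∈ S, d * m ∈ S) (hstar : ∀ d ∈ S, star d ∈ S)
    (hnorm : ∀ k n, ‖f k n‖ ≤ 1) (hself : ∀ k n, star (f k n) = f k n)
    (hcent : ∀ d ∈ S, ∀ k, Tendsto (fun n ↦ f k n * d - d * f k n) atTop (𝓝 0))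
    (hproj : ∀ d ∈ S, ∀ j k,
      Tendsto (fun n ↦ f j n * f k n * d - if j = k then f k n * d else 0) atTop (𝓝 0))
    (hsum : ∀ d ∈ S, Tendsto (fun n ↦ ∑ k, f k n * d - d) atTop (𝓝 0))
    (u : G → unitary M) (hw : ∀ n, ∑ k, u k * f k n ∈ closure {x : M | IsUnit x}) :
    ∃ v : ℕ → unitary M, ∀ d ∈ S, ∀ k,
      Tendsto (fun n ↦ v n * (f k n * d) * star (v n : M) - u k * d * star (u k : M) * f k n)
        atTop (𝓝 0) := by
  have hC : ∀ n, ‖∑ k, u k * f k n‖ ≤ ∑ _k : G, (1 : ℝ) := fun n ↦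
    norm_sum_le_of_le _ fun k _ ↦ (norm_mul_le _ _).trans <|
      mul_le_one₀ (norm_le_one_of_mem_unitary (u k).2) (norm_nonneg _) (hnorm k n)
  obtain ⟨v, hv⟩ := exists_unitary_tendsto_mul_sub hC hw
  have hv1 : ∀ n, ‖(v n : M)‖ ≤ 1 := fun n ↦ norm_le_one_of_mem_unitary (v n).2
  have hv1' : ∀ n, ‖star (v n : M)‖ ≤ 1 := fun n ↦ by rw [norm_star]; exact hv1 n
  have hleft : ∀ d ∈ S, ∀ k,
      Tendsto (fun n ↦ v n * (f k n * d) - u k * (f k n * d)) atTop (𝓝 0) := fun d hd k ↦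
    tendsto_unitary_mul_rohlin hnorm hcent hproj hv1 hC (fun d hd ↦ hv d <|
      tendsto_star_mul_self_of_rohlin hl hnorm hcent hproj hself hsum u hd) hd k
  refine ⟨v, fun d hd k ↦ ?_⟩
  have h1 := tendsto_zero_mul_of_norm_le (hleft d hd k) hv1'
  have h2 := (tendsto_zero_mul_of_norm_le (hcent d hd k) hv1').const_mul (u k : M)
  have h3 := (hleft (star d) (hstar d hd) k).star.const_mul (u k : M)
  have h4 := ((hcent d hd k).mul_const (star (u k : M))).const_mul (u k : M)
  have h5 := (hcent _ (hr (star (u k : M)) d hd) k).const_mul (u k : M)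
  have h := (((h1.add h2).add h3).sub h4).add h5
  simp only [mul_zero, zero_mul, star_zero, add_zero, sub_zero] at h
  refine h.congr fun n ↦ ?_
  simp only [star_sub, star_mul, star_star, hself]
  noncomm_ring

end RohlinUnitary

section RohlinTower

open DoubleCentralizer

variable {A G : Type*} [NonUnitalCStarAlgebra A]

theorem tendsto_starAlgEquiv_apply_zero (σ : ℕ → A ≃⋆ₐ[ℂ] A) {x : ℕ → A}
    (hx : Tendsto x atTop (𝓝 0)) : Tendsto (fun n ↦ σ n (x n)) atTop (𝓝 0) :=
  squeeze_zero_norm (fun n ↦ (StarAlgEquiv.norm_map (σ n) (x n)).le)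
    (tendsto_zero_iff_norm_tendsto_zero.mp hx)

theorem norm_apply_sub_eq_norm_sub_symm_apply (σ : A ≃⋆ₐ[ℂ] A) (a b : A) :
    ‖σ a - b‖ = ‖a - σ.symm b‖ := by
  rw [← StarAlgEquiv.norm_map σ (a - σ.symm b), map_sub, StarAlgEquiv.apply_symm_apply]

variable [Group G]

/-- Pointwise approximate unitary equivalence of two actions, via unitary multipliers. -/
def ApproxUnitarilyEquivalent (α β : G →* (A ≃⋆ₐ[ℂ] A)) : Prop :=
  ∀ (g : G) (F : Finset A) (δ : ℝ), 0 < δ →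
    ∃ σ ∈ (innerAut (A := A)).range, ∀ y ∈ F, ‖σ (β g y) - α g y‖ < δ

/-- The conjugate `g ↦ σ * α g * σ⁻¹` of an action by an automorphism. -/
def conjAction (σ : A ≃⋆ₐ[ℂ] A) (α : G →* (A ≃⋆ₐ[ℂ] A)) : G →* (A ≃⋆ₐ[ℂ] A) :=
  (MulAut.conj σ).toMonoidHom.comp α

theorem conjAction_apply (σ : A ≃⋆ₐ[ℂ] A) (α : G →* (A ≃⋆ₐ[ℂ] A)) (g : G) (a : A) :
    conjAction σ α g a = σ (α g (σ.symm a)) :=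
  rfl

theorem conjAction_mul (σ τ : A ≃⋆ₐ[ℂ] A) (α : G →* (A ≃⋆ₐ[ℂ] A)) :
    conjAction (σ * τ) α = conjAction σ (conjAction τ α) := by
  ext g a
  rfl

theorem conjAction_one (α : G →* (A ≃⋆ₐ[ℂ] A)) : conjAction 1 α = α := by
  ext g a
  rfl

namespace ApproxUnitarilyEquivalent

variable {α β : G →* (A ≃⋆ₐ[ℂ] A)}

theorem symm (h : ApproxUnitarilyEquivalent α β) : ApproxUnitarilyEquivalent β α := by
  intro g F δ hδ
  obtain ⟨σ, hσ, hF⟩ := h g F δ hδ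
  refine ⟨σ⁻¹, inv_mem hσ, fun y hy ↦ ?_⟩
  rw [norm_sub_rev, StarAlgEquiv.aut_inv, ← norm_apply_sub_eq_norm_sub_symm_apply]
  exact hF y hy

theorem conjAction_right (h : ApproxUnitarilyEquivalent α β) {σ : A ≃⋆ₐ[ℂ] A}
    (hσ : σ ∈ (innerAut (A := A)).range) : ApproxUnitarilyEquivalent α (conjAction σ β) := by
  intro g F δ hδ
  obtain ⟨τ, hτ, hF⟩ := h g F δ hδ
  refine ⟨τ * (σ * (β g * σ⁻¹ * (β g)⁻¹))⁻¹, mul_mem hτ (inv_mem (mul_mem hσ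
    (innerAut_range_normal.conj_mem _ (inv_mem hσ) _))), fun y hy ↦ ?_⟩
  have : (τ * (σ * (β g * σ⁻¹ * (β g)⁻¹))⁻¹) * conjAction σ β g = τ * β g := by
    change (τ * (σ * (β g * σ⁻¹ * (β g)⁻¹))⁻¹) * (σ * β g * σ⁻¹) = τ * β g
    group
  rw [← StarAlgEquiv.mul_apply, this]
  exact hF y hy

theorem conjAction_left (h : ApproxUnitarilyEquivalent α β) {σ : A ≃⋆ₐ[ℂ] A}
    (hσ : σ ∈ (innerAut (A := A)).range) : ApproxUnitarilyEquivalent (conjAction σ α) β :=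
  (h.symm.conjAction_right hσ).symm

end ApproxUnitarilyEquivalent

variable [Fintype G]

/-- A sequence representing a Rohlin partition of unity, indexed by `G`, for the action `β`. -/
structure IsRohlinTower (β : G →* (A ≃⋆ₐ[ℂ] A)) (f : G → ℕ → A) : Prop where
  star_eq : ∀ k n, star (f k n) = f k n
  norm_le_one : ∀ k n, ‖f k n‖ ≤ 1
  central : ∀ a k, Tendsto (fun n ↦ f k n * a - a * f k n) atTop (𝓝 0)
  orthogonal : ∀ a j k, j ≠ k → Tendsto (fun n ↦ f j n * f k n * a) atTop (𝓝 0)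
  idempotent : ∀ a k, Tendsto (fun n ↦ f k n * f k n * a - f k n * a) atTop (𝓝 0)
  sum : ∀ a, Tendsto (fun n ↦ ∑ k, f k n * a - a) atTop (𝓝 0)
  equivariant : ∀ a g h, Tendsto (fun n ↦ (β g (f h n) - f (g * h) n) * a) atTop (𝓝 0)

namespace IsRohlinTower

variable {β : G →* (A ≃⋆ₐ[ℂ] A)} {f : G → ℕ → A}

theorem conj (hf : IsRohlinTower β f) (σ : A ≃⋆ₐ[ℂ] A) :
    IsRohlinTower (conjAction σ β) (fun k n ↦ σ (f k n)) where
  star_eq k n := by rw [← map_star, hf.star_eq]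
  norm_le_one k n := (StarAlgEquiv.norm_map σ _).trans_le (hf.norm_le_one k n)
  central a k := by
    simpa using tendsto_starAlgEquiv_apply_zero (fun _ ↦ σ) (hf.central (σ.symm a) k)
  orthogonal a j k hjk := by
    simpa using tendsto_starAlgEquiv_apply_zero (fun _ ↦ σ) (hf.orthogonal (σ.symm a) j k hjk)
  idempotent a k := by
    simpa using tendsto_starAlgEquiv_apply_zero (fun _ ↦ σ) (hf.idempotent (σ.symm a) k)
  sum a := by
    simpa using tendsto_starAlgEquiv_apply_zero (fun _ ↦ σ) (hf.sum (σ.symm a))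
  equivariant a g h := by
    simpa [conjAction_apply] using
      tendsto_starAlgEquiv_apply_zero (fun _ ↦ σ) (hf.equivariant (σ.symm a) g h)

theorem tendsto_sub_sum (hf : IsRohlinTower β f) (a : A) :
    Tendsto (fun n ↦ a - ∑ k, a * f k n) atTop (𝓝 0) := by
  have h := (tendsto_finsetSum Finset.univ fun k _ ↦ hf.central a k).sub (hf.sum a)
  simp only [Finset.sum_const_zero, sub_zero, Finset.sum_sub_distrib] at h
  exact h.congr fun n ↦ by abel

theorem eventually_norm_sub_lt (hf : IsRohlinTower β f) {x : ℕ → A} {e : G → A} {b : A} {δ ε : ℝ}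
    (hx : Tendsto (fun n ↦ x n - ∑ k, e k * f k n) atTop (𝓝 0)) (he : ∀ k, ‖e k - b‖ ≤ δ)
    (hδ : Fintype.card G * δ < ε) : ∀ᶠ n in atTop, ‖x n - b‖ < ε := by
  have h := (hx.sub (hf.tendsto_sub_sum b)).norm
  rw [sub_zero, norm_zero] at h
  filter_upwards [h.eventually_lt_const (sub_pos.mpr hδ)] with n hn
  have hsum : ‖∑ k, (e k - b) * f k n‖ ≤ Fintype.card G * δ := by
    refine (norm_sum_le_of_le (f := fun k ↦ (e k - b) * f k n) (n := fun _ ↦ δ) _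
      fun k _ ↦ ?_).trans_eq (by simp)
    exact (norm_mul_le _ _).trans <|
      (mul_le_of_le_one_right (norm_nonneg _) (hf.norm_le_one k n)).trans (he k)
  calc ‖x n - b‖ = ‖(x n - ∑ k, e k * f k n - (b - ∑ k, b * f k n)) +
        ∑ k, (e k - b) * f k n‖ := by
        congr 1
        simp only [sub_mul, Finset.sum_sub_distrib]
        abel
    _ ≤ _ := norm_add_le _ _
    _ < ε := by linarith

/-- The inner automorphisms given by `u k` can be glued along a Rohlin tower. -/
theorem exists_innerAut_tendsto (hf : IsRohlinTower β f)
    (hGL : ∀ a : A, (a : 𝓜(ℂ, A)) ∈ closure {x : 𝓜(ℂ, A) | IsUnit x})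
    (u : G → unitary 𝓜(ℂ, A)) :
    ∃ v : ℕ → unitary 𝓜(ℂ, A), ∀ d k,
      Tendsto (fun n ↦ innerAut (v n) (f k n * d) - innerAut (u k) d * f k n) atTop (𝓝 0) := by
  classical
  have hcoe : ∀ {x : ℕ → A}, Tendsto x atTop (𝓝 0) →
      Tendsto (fun n ↦ (x n : 𝓜(ℂ, A))) atTop (𝓝 0) := fun {x} hx ↦
    squeeze_zero_norm (fun n ↦ (norm_coe (x n)).le) (tendsto_zero_iff_norm_tendsto_zero.mp hx)
  have hsum_coe : ∀ x : G → A, ((∑ k, x k : A) : 𝓜(ℂ, A)) = ∑ k, (x k : 𝓜(ℂ, A)) := fun x ↦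
    map_sum (coeHom : A →⋆ₙₐ[ℂ] 𝓜(ℂ, A)) x _
  obtain ⟨v, hv⟩ := exists_unitary_tendsto_conj_rohlin (M := 𝓜(ℂ, A))
    (S := Set.range (DoubleCentralizer.coe ℂ)) (f := fun k n ↦ (f k n : 𝓜(ℂ, A)))
    (by rintro m _ ⟨d, rfl⟩; exact ⟨m.fst d, coe_fst_apply m d⟩)
    (by rintro m _ ⟨d, rfl⟩; exact ⟨m.snd d, coe_snd_apply m d⟩)
    (by rintro _ ⟨d, rfl⟩; exact ⟨star d, coe_star d⟩)
    (fun k n ↦ (norm_coe _).trans_le (hf.norm_le_one k n))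
    (fun k n ↦ by rw [← coe_star, hf.star_eq])
    (by
      rintro _ ⟨d, rfl⟩ k
      simpa only [coe_sub, coe_mul] using hcoe (hf.central d k))
    (by
      rintro _ ⟨d, rfl⟩ j k
      split_ifs with hjk
      · subst hjk
        simpa only [coe_sub, coe_mul] using hcoe (hf.idempotent d j)
      · simpa only [sub_zero, coe_mul] using hcoe (hf.orthogonal d j k hjk))
    (by
      rintro _ ⟨d, rfl⟩
      simpa only [coe_sub, coe_mul, hsum_coe] using hcoe (hf.sum d))
    u (fun n ↦ by
      have h := hGL (∑ k, (u k : 𝓜(ℂ, A)).fst (f k n))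
      simpa only [hsum_coe, coe_fst_apply] using h)
  refine ⟨v, fun d k ↦ ?_⟩
  have h := hv d ⟨d, rfl⟩ k
  rw [tendsto_zero_iff_norm_tendsto_zero] at h ⊢
  refine h.congr fun n ↦ ?_
  rw [← norm_coe (innerAut (v n) (f k n * d) - innerAut (u k) d * f k n), coe_sub, coe_innerAut,
    coe_mul, coe_mul, coe_innerAut]

section Glue

variable {σ : ℕ → A ≃⋆ₐ[ℂ] A} {τ : G → A ≃⋆ₐ[ℂ] A}

theorem tendsto_glue_apply (hf : IsRohlinTower β f)
    (hσ : ∀ d k, Tendsto (fun n ↦ σ n (f k n * d) - τ k d * f k n) atTop (𝓝 0)) (a : A) :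
    Tendsto (fun n ↦ σ n a - ∑ k, τ k a * f k n) atTop (𝓝 0) := by
  have h := (tendsto_finsetSum Finset.univ fun k _ ↦ hσ a k).sub
    (tendsto_starAlgEquiv_apply_zero σ (hf.sum a))
  simp only [Finset.sum_const_zero, sub_zero, Finset.sum_sub_distrib, map_sub, map_sum] at h
  exact h.congr fun n ↦ by abel

theorem tendsto_glue_symm_apply (hf : IsRohlinTower β f)
    (hσ : ∀ d k, Tendsto (fun n ↦ σ n (f k n * d) - τ k d * f k n) atTop (𝓝 0)) (a : A) :
    Tendsto (fun n ↦ (σ n).symm a - ∑ k, f k n * (τ k).symm a) atTop (𝓝 0) := by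
  have h := (hf.tendsto_sub_sum a).sub
    (tendsto_finsetSum Finset.univ fun k _ ↦ hσ ((τ k).symm a) k)
  simp only [Finset.sum_const_zero, sub_zero, StarAlgEquiv.apply_symm_apply,
    Finset.sum_sub_distrib] at h
  refine (tendsto_starAlgEquiv_apply_zero (fun n ↦ (σ n).symm) h).congr fun n ↦ ?_
  simp only [map_sub, map_sum, StarAlgEquiv.symm_apply_apply]
  abel

theorem tendsto_glue_conj (hf : IsRohlinTower β f)
    (hσ : ∀ d k, Tendsto (fun n ↦ σ n (f k n * d) - τ k d * f k n) atTop (𝓝 0)) (h : G) (a : A) :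
    Tendsto (fun n ↦ σ n (β h ((σ n).symm a)) -
      ∑ k, τ k (β h ((τ (h⁻¹ * k)).symm a)) * f k n) atTop (𝓝 0) := by
  have h1 := tendsto_starAlgEquiv_apply_zero (fun _ ↦ β h) (hf.tendsto_glue_symm_apply hσ a)
  have h2 := tendsto_finsetSum Finset.univ fun k _ ↦
    hf.equivariant (β h ((τ k).symm a)) h k
  have h3 := tendsto_finsetSum Finset.univ fun k _ ↦ hσ (β h ((τ k).symm a)) (h * k)
  have h12 := h1.add h2
  rw [Finset.sum_const_zero, add_zero] at h12
  have h5 := (tendsto_starAlgEquiv_apply_zero σ h12).add h3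
  rw [Finset.sum_const_zero, add_zero] at h5
  refine h5.congr fun n ↦ ?_
  rw [← Fintype.sum_equiv (Equiv.mulLeft h)
    (fun k ↦ τ (h * k) (β h ((τ k).symm a)) * f (h * k) n)
    (fun k ↦ τ k (β h ((τ (h⁻¹ * k)).symm a)) * f k n) (fun k ↦ by simp)]
  simp only [map_sub, map_sum, map_add, map_mul, sub_mul, Finset.sum_sub_distrib]
  abel

end Glue

theorem exists_inner_conj_near (hf : IsRohlinTower β f)
    (hGL : ∀ a : A, (a : 𝓜(ℂ, A)) ∈ closure {x : 𝓜(ℂ, A) | IsUnit x})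
    {α : G →* (A ≃⋆ₐ[ℂ] A)} (hαβ : ApproxUnitarilyEquivalent α β) (F F₀ : Finset A) {ε η : ℝ}
    (hε : 0 < ε) (hη : 0 < η) (hF₀ : ∀ h, ∀ a ∈ F₀, ‖β h a - α h a‖ < η) :
    ∃ σ ∈ (innerAut (A := A)).range,
      (∀ h, ∀ a ∈ F, ‖conjAction σ β h a - α h a‖ < ε) ∧
      ∀ a ∈ F₀, ‖σ a - a‖ < 2 * Fintype.card G * η := by
  classical
  have hcard : (0 : ℝ) < Fintype.card G := by exact_mod_cast Fintype.card_pos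
  obtain ⟨δ, hδ, hδη, hδε⟩ : ∃ δ > 0, δ ≤ η / 2 ∧ δ ≤ ε / (4 * Fintype.card G) :=
    ⟨min (η / 2) (ε / (4 * Fintype.card G)), by positivity, min_le_left _ _, min_le_right _ _⟩
  have hδε' : Fintype.card G * (δ + δ) < ε := by
    rw [le_div_iff₀ (by positivity)] at hδε
    linarith
  let E : Finset A := Finset.univ.biUnion fun g : G ↦ F.image (α g⁻¹) ∪ F₀.image (β g⁻¹)
  choose τ hτ hτE using fun g ↦ hαβ g E δ hδ
  choose u hu using hτ
  have hE : ∀ a ∈ F, ∀ k h, ‖τ (h * k) (β (h * k) (α k⁻¹ a)) - α h a‖ < δ := fun a ha k h ↦ by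
    have h1 := hτE (h * k) (α k⁻¹ a) (Finset.mem_biUnion.mpr ⟨k, Finset.mem_univ k,
      Finset.mem_union_left _ (Finset.mem_image_of_mem _ ha)⟩)
    rwa [← StarAlgEquiv.mul_apply (α (h * k)), ← map_mul, mul_inv_cancel_right] at h1
  obtain ⟨v, hv⟩ := hf.exists_innerAut_tendsto hGL u
  simp only [hu] at hv
  have hev₁ : ∀ᶠ n in atTop, ∀ h, ∀ a ∈ F, ‖conjAction (innerAut (v n)) β h a - α h a‖ < ε := by
    rw [eventually_all]
    intro h
    rw [Filter.eventually_all_finset]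
    intro a ha
    refine hf.eventually_norm_sub_lt (hf.tendsto_glue_conj hv h a) (fun k ↦ ?_) hδε'
    have h1 := hE a ha (h⁻¹ * k) 1
    have h2 := hE a ha (h⁻¹ * k) h
    rw [map_one, StarAlgEquiv.one_apply, one_mul, norm_apply_sub_eq_norm_sub_symm_apply] at h1
    rw [mul_inv_cancel_left] at h2
    have h3 : ‖τ k (β h ((τ (h⁻¹ * k)).symm a)) - τ k (β k (α (h⁻¹ * k)⁻¹ a))‖ < δ := by
      have hβ : β k = β h * β (h⁻¹ * k) := by rw [← map_mul, mul_inv_cancel_left]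
      rw [hβ, StarAlgEquiv.mul_apply, ← map_sub, ← map_sub, StarAlgEquiv.norm_map,
        StarAlgEquiv.norm_map, norm_sub_rev]
      exact h1
    linarith [norm_sub_le_norm_sub_add_norm_sub (τ k (β h ((τ (h⁻¹ * k)).symm a)))
      (τ k (β k (α (h⁻¹ * k)⁻¹ a))) (α h a)]
  have hev₂ : ∀ᶠ n in atTop, ∀ a ∈ F₀, ‖innerAut (v n) a - a‖ < 2 * Fintype.card G * η := by
    rw [Filter.eventually_all_finset]
    intro a ha
    refine hf.eventually_norm_sub_lt (hf.tendsto_glue_apply hv a) (δ := δ + η) (fun k ↦ ?_)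
      (by nlinarith)
    have h1 := hτE k (β k⁻¹ a) (Finset.mem_biUnion.mpr ⟨k, Finset.mem_univ k,
      Finset.mem_union_right _ (Finset.mem_image_of_mem _ ha)⟩)
    have hβ : β k (β k⁻¹ a) = a := by
      rw [← StarAlgEquiv.mul_apply, ← map_mul, mul_inv_cancel, map_one, StarAlgEquiv.one_apply]
    have hα : α k (α k⁻¹ a) = a := by
      rw [← StarAlgEquiv.mul_apply, ← map_mul, mul_inv_cancel, map_one, StarAlgEquiv.one_apply]
    have h2 : ‖α k (β k⁻¹ a) - a‖ < η := by
      rw [← hα, ← map_sub, StarAlgEquiv.norm_map, hα]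
      exact hF₀ k⁻¹ a ha
    rw [hβ] at h1
    linarith [norm_sub_le_norm_sub_add_norm_sub (τ k a) (α k (β k⁻¹ a)) a]
  obtain ⟨n, hn₁, hn₂⟩ := (hev₁.and hev₂).exists
  exact ⟨innerAut (v n), ⟨v n, rfl⟩, hn₁, hn₂⟩

end IsRohlinTower

end RohlinTower

section Limit

variable {A : Type*} [NonUnitalCStarAlgebra A]

theorem tendsto_starAlgEquiv_apply {P : ℕ → A ≃⋆ₐ[ℂ] A} {x : ℕ → A} {a b : A}
    (hP : Tendsto (fun n ↦ P n a) atTop (𝓝 b)) (hx : Tendsto x atTop (𝓝 a)) :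
    Tendsto (fun n ↦ P n (x n)) atTop (𝓝 b) := by
  have h := (tendsto_starAlgEquiv_apply_zero P (tendsto_sub_nhds_zero_iff.mpr hx)).add hP
  rw [zero_add] at h
  exact h.congr fun n ↦ by rw [map_sub, sub_add_cancel]

theorem cauchySeq_starAlgEquiv_apply {P : ℕ → A ≃⋆ₐ[ℂ] A} {d : ℕ → A} (hd : DenseRange d)
    (h : ∀ n, ∀ i < n, ‖P (n + 1) (d i) - P n (d i)‖ < (1 / 2) ^ n) (a : A) :
    CauchySeq fun n ↦ P n a := by
  have hdi : ∀ i, CauchySeq fun n ↦ P n (d i) := fun i ↦ by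
    rw [← cauchySeq_shift (i + 1)]
    refine cauchySeq_of_le_geometric (1 / 2) 1 (by norm_num) fun n ↦ ?_
    rw [dist_comm, dist_eq_norm, one_mul, Nat.add_right_comm]
    exact (h _ i (by omega)).le.trans
      (pow_le_pow_of_le_one (by norm_num) (by norm_num) (by omega))
  rw [Metric.cauchySeq_iff]
  intro ε hε
  obtain ⟨i, hi⟩ := hd.exists_dist_lt a (show 0 < ε / 3 by positivity)
  obtain ⟨N, hN⟩ := Metric.cauchySeq_iff.mp (hdi i) (ε / 3) (by positivity)
  refine ⟨N, fun m hm n hn ↦ ?_⟩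
  have h1 := dist_triangle4 (P m a) (P m (d i)) (P n (d i)) (P n a)
  rw [(StarAlgEquiv.isometry (P m)).dist_eq, (StarAlgEquiv.isometry (P n)).dist_eq,
    dist_comm (d i) a] at h1
  linarith [hN m hm n hn]

theorem exists_starAlgEquiv_tendsto {P : ℕ → A ≃⋆ₐ[ℂ] A} (h : ∀ a, CauchySeq fun n ↦ P n a)
    (h' : ∀ a, CauchySeq fun n ↦ (P n).symm a) :
    ∃ φ : A ≃⋆ₐ[ℂ] A, (∀ a, Tendsto (fun n ↦ P n a) atTop (𝓝 (φ a))) ∧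
      ∀ a, Tendsto (fun n ↦ (P n).symm a) atTop (𝓝 (φ.symm a)) := by
  choose φ hφ using fun a ↦ cauchySeq_tendsto_of_complete (h a)
  choose ψ hψ using fun a ↦ cauchySeq_tendsto_of_complete (h' a)
  refine ⟨{ toFun := φ
            invFun := ψ
            left_inv := fun a ↦ tendsto_nhds_unique
              (tendsto_starAlgEquiv_apply (P := fun n ↦ (P n).symm) (hψ (φ a)) (hφ a)) (by simp)
            right_inv := fun a ↦ tendsto_nhds_unique
              (tendsto_starAlgEquiv_apply (hφ (ψ a)) (hψ a)) (by simp)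
            map_mul' := fun a b ↦ tendsto_nhds_unique (hφ (a * b)) <| by
              simpa using (hφ a).mul (hφ b)
            map_add' := fun a b ↦ tendsto_nhds_unique (hφ (a + b)) <| by
              simpa using (hφ a).add (hφ b)
            map_star' := fun a ↦ tendsto_nhds_unique (hφ (star a)) <| by
              simpa [map_star] using (hφ a).star
            map_smul' := fun c a ↦ tendsto_nhds_unique (hφ (c • a)) <| by
              simpa using (hφ a).const_smul c }, hφ, hψ⟩

theorem tendsto_conjAction {G : Type*} [Group G] {P : ℕ → A ≃⋆ₐ[ℂ] A} {φ : A ≃⋆ₐ[ℂ] A}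
    (h : ∀ a, Tendsto (fun n ↦ P n a) atTop (𝓝 (φ a)))
    (h' : ∀ a, Tendsto (fun n ↦ (P n).symm a) atTop (𝓝 (φ.symm a)))
    (α : G →* (A ≃⋆ₐ[ℂ] A)) (g : G) (a : A) :
    Tendsto (fun n ↦ conjAction (P n) α g a) atTop (𝓝 (conjAction φ α g a)) :=
  tendsto_starAlgEquiv_apply (x := fun n ↦ α g ((P n).symm a)) (h (α g (φ.symm a)))
    (((StarAlgEquiv.isometry (α g)).continuous.tendsto _).comp (h' a))

end Limit

section Intertwining

open DoubleCentralizer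

variable {A G : Type*} [NonUnitalCStarAlgebra A] [Group G] [Fintype G]
  {α β : G →* (A ≃⋆ₐ[ℂ] A)} {f f' : G → ℕ → A}

/-- Two Rohlin actions which are almost equal on `d i` and `Q (d i)` for `i < n` can be made closer
to each other by conjugating the second one by an inner automorphism close to the identity. -/
theorem IsRohlinTower.exists_intertwining_step (hf : IsRohlinTower β f)
    (hGL : ∀ a : A, (a : 𝓜(ℂ, A)) ∈ closure {x : 𝓜(ℂ, A) | IsUnit x})
    (hαβ : ApproxUnitarilyEquivalent α β) {P Q : A ≃⋆ₐ[ℂ] A}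
    (hP : P ∈ (innerAut (A := A)).range) (hQ : Q ∈ (innerAut (A := A)).range)
    (d : ℕ → A) (n m : ℕ) {η ε : ℝ} (hη : 0 < η) (hε : 0 < ε)
    (hd : ∀ h, ∀ i < n, ‖conjAction Q β h (d i) - conjAction P α h (d i)‖ < η)
    (hQd : ∀ h, ∀ i < n, ‖conjAction Q β h (Q (d i)) - conjAction P α h (Q (d i))‖ < η) :
    ∃ Q' ∈ (innerAut (A := A)).range,
      (∀ h, ∀ i < m, ‖conjAction Q' β h (d i) - conjAction P α h (d i)‖ < ε) ∧
      (∀ h, ∀ i < m, ‖conjAction Q' β h (P (d i)) - conjAction P α h (P (d i))‖ < ε) ∧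
      (∀ i < n, ‖Q' (d i) - Q (d i)‖ < 2 * Fintype.card G * η) ∧
      ∀ i < n, ‖Q'.symm (d i) - Q.symm (d i)‖ < 2 * Fintype.card G * η := by
  classical
  obtain ⟨σ, hσ, h1, h2⟩ := (hf.conj Q).exists_inner_conj_near hGL
    ((hαβ.conjAction_left hP).conjAction_right hQ)
    ((Finset.range m).image d ∪ (Finset.range m).image fun i ↦ P (d i))
    ((Finset.range n).image d ∪ (Finset.range n).image fun i ↦ Q (d i)) hε hη (by
      intro h a ha
      simp only [Finset.mem_union, Finset.mem_image, Finset.mem_range] at ha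
      obtain ⟨i, hi, rfl⟩ | ⟨i, hi, rfl⟩ := ha
      exacts [hd h i hi, hQd h i hi])
  simp only [← conjAction_mul, Finset.mem_union, Finset.mem_image, Finset.mem_range] at h1 h2
  refine ⟨σ * Q, mul_mem hσ hQ, fun h i hi ↦ h1 h _ (.inl ⟨i, hi, rfl⟩),
    fun h i hi ↦ h1 h _ (.inr ⟨i, hi, rfl⟩), fun i hi ↦ h2 _ (.inr ⟨i, hi, rfl⟩), fun i hi ↦ ?_⟩
  change ‖Q.symm (σ.symm (d i)) - Q.symm (d i)‖ < _
  rw [← map_sub, StarAlgEquiv.norm_map, norm_sub_rev, ← norm_apply_sub_eq_norm_sub_symm_apply]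
  exact h2 _ (.inl ⟨i, hi, rfl⟩)

/-- The Evans–Kishimoto intertwining of two Rohlin actions. -/
theorem IsRohlinTower.exists_intertwining (hf : IsRohlinTower α f) (hf' : IsRohlinTower β f')
    (hGL : ∀ a : A, (a : 𝓜(ℂ, A)) ∈ closure {x : 𝓜(ℂ, A) | IsUnit x})
    (hαβ : ApproxUnitarilyEquivalent α β) (d : ℕ → A) :
    ∃ P Q : ℕ → A ≃⋆ₐ[ℂ] A,
      (∀ n, P n ∈ (innerAut (A := A)).range) ∧ (∀ n, Q n ∈ (innerAut (A := A)).range) ∧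
      (∀ n h, ∀ i < n, ‖conjAction (Q n) β h (d i) - conjAction (P n) α h (d i)‖ < (1 / 2) ^ n) ∧
      (∀ n, ∀ i < n, ‖P (n + 1) (d i) - P n (d i)‖ < (1 / 2) ^ n) ∧
      (∀ n, ∀ i < n, ‖(P (n + 1)).symm (d i) - (P n).symm (d i)‖ < (1 / 2) ^ n) ∧
      (∀ n, ∀ i < n, ‖Q (n + 1) (d i) - Q n (d i)‖ < (1 / 2) ^ n) ∧
      ∀ n, ∀ i < n, ‖(Q (n + 1)).symm (d i) - (Q n).symm (d i)‖ < (1 / 2) ^ n := by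
  have hcard : (1 : ℝ) ≤ Fintype.card G := by exact_mod_cast Fintype.card_pos
  let η : ℕ → ℝ := fun n ↦ (1 / 2) ^ n / (2 * Fintype.card G)
  have hη : ∀ n, 0 < η n := fun n ↦ by positivity
  have hη_card : ∀ n, 2 * Fintype.card G * η n = (1 / 2) ^ n := fun n ↦
    mul_div_cancel₀ _ (by positivity)
  have hη_le : ∀ n, η n ≤ (1 / 2) ^ n := fun n ↦ div_le_self (by positivity) (by linarith)
  let Good : ℕ → (A ≃⋆ₐ[ℂ] A) × (A ≃⋆ₐ[ℂ] A) → Prop := fun n s ↦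
    s.1 ∈ (innerAut (A := A)).range ∧ s.2 ∈ (innerAut (A := A)).range ∧
    (∀ h, ∀ i < n, ‖conjAction s.2 β h (d i) - conjAction s.1 α h (d i)‖ < η n) ∧
    ∀ h, ∀ i < n, ‖conjAction s.2 β h (s.2 (d i)) - conjAction s.1 α h (s.2 (d i))‖ < η n
  have hstep : ∀ n s, Good n s → ∃ s', Good (n + 1) s' ∧
      (∀ i < n, ‖s'.1 (d i) - s.1 (d i)‖ < (1 / 2) ^ n) ∧
      (∀ i < n, ‖s'.1.symm (d i) - s.1.symm (d i)‖ < (1 / 2) ^ n) ∧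
      (∀ i < n, ‖s'.2 (d i) - s.2 (d i)‖ < (1 / 2) ^ n) ∧
      ∀ i < n, ‖s'.2.symm (d i) - s.2.symm (d i)‖ < (1 / 2) ^ n := by
    rintro n ⟨P, Q⟩ ⟨hP, hQ, h1, h2⟩
    obtain ⟨Q', hQ', h3, h4, h5, h6⟩ :=
      hf'.exists_intertwining_step hGL hαβ hP hQ d n n (hη n) (hη n) h1 h2
    obtain ⟨P', hP', h7, h8, h9, h10⟩ :=
      hf.exists_intertwining_step hGL hαβ.symm hQ' hP d n (n + 1) (hη n) (hη (n + 1))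
        (fun h i hi ↦ by rw [norm_sub_rev]; exact h3 h i hi)
        (fun h i hi ↦ by rw [norm_sub_rev]; exact h4 h i hi)
    rw [hη_card] at h5 h6 h9 h10
    exact ⟨(P', Q'), ⟨hP', hQ', fun h i hi ↦ by rw [norm_sub_rev]; exact h7 h i hi,
      fun h i hi ↦ by rw [norm_sub_rev]; exact h8 h i hi⟩, h9, h10, h5, h6⟩
  choose! next hnext_good hnext using hstep
  let s : ℕ → (A ≃⋆ₐ[ℂ] A) × (A ≃⋆ₐ[ℂ] A) := fun n ↦ Nat.rec (1, 1) next n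
  have hs : ∀ n, Good n (s n) := fun n ↦ by
    induction n with
    | zero => exact ⟨one_mem _, one_mem _, by simp, by simp⟩
    | succ n ih => exact hnext_good n _ ih
  exact ⟨fun n ↦ (s n).1, fun n ↦ (s n).2, fun n ↦ (hs n).1, fun n ↦ (hs n).2.1,
    fun n h i hi ↦ ((hs n).2.2.1 h i hi).trans_le (hη_le n),
    fun n ↦ (hnext n _ (hs n)).1, fun n ↦ (hnext n _ (hs n)).2.1,
    fun n ↦ (hnext n _ (hs n)).2.2.1, fun n ↦ (hnext n _ (hs n)).2.2.2⟩

/-- Two Rohlin actions which are pointwise approximately unitarily equivalent are conjugate by an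
approximately inner automorphism. -/
theorem IsRohlinTower.exists_conjAction_eq [TopologicalSpace.SeparableSpace A]
    (hf : IsRohlinTower α f) (hf' : IsRohlinTower β f')
    (hGL : ∀ a : A, (a : 𝓜(ℂ, A)) ∈ closure {x : 𝓜(ℂ, A) | IsUnit x})
    (hαβ : ApproxUnitarilyEquivalent α β) :
    ∃ θ : A ≃⋆ₐ[ℂ] A,
      (∀ (F : Finset A) (ε : ℝ), 0 < ε →
        ∃ σ ∈ (innerAut (A := A)).range, ∀ a ∈ F, ‖θ a - σ a‖ < ε) ∧
      conjAction θ α = β := by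
  have hd := TopologicalSpace.denseRange_denseSeq A
  obtain ⟨P, Q, hP, hQ, hPQ, hP1, hP2, hQ1, hQ2⟩ :=
    hf.exists_intertwining hf' hGL hαβ (TopologicalSpace.denseSeq A)
  obtain ⟨φ, hφ, hφ'⟩ := exists_starAlgEquiv_tendsto (cauchySeq_starAlgEquiv_apply hd hP1)
    (cauchySeq_starAlgEquiv_apply (P := fun n ↦ (P n).symm) hd hP2)
  obtain ⟨ψ, hψ, hψ'⟩ := exists_starAlgEquiv_tendsto (cauchySeq_starAlgEquiv_apply hd hQ1)
    (cauchySeq_starAlgEquiv_apply (P := fun n ↦ (Q n).symm) hd hQ2)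
  have hconj : conjAction φ α = conjAction ψ β := by
    ext g a
    refine congrFun (hd.equalizer (StarAlgEquiv.isometry _).continuous
      (StarAlgEquiv.isometry _).continuous (funext fun i ↦ ?_)) a
    have h1 := (tendsto_conjAction hψ hψ' β g (TopologicalSpace.denseSeq A i)).sub
      (tendsto_conjAction hφ hφ' α g (TopologicalSpace.denseSeq A i))
    have h2 : Tendsto (fun n ↦ conjAction (Q n) β g (TopologicalSpace.denseSeq A i) -
        conjAction (P n) α g (TopologicalSpace.denseSeq A i)) atTop (𝓝 0) :=
      squeeze_zero_norm' ((eventually_gt_atTop i).mono fun n hn ↦ (hPQ n g i hn).le)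
        (tendsto_pow_atTop_nhds_zero_of_lt_one (by norm_num) (by norm_num))
    exact (sub_eq_zero.mp (tendsto_nhds_unique h1 h2)).symm
  refine ⟨ψ⁻¹ * φ, fun F ε hε ↦ ?_, ?_⟩
  · have hlim : ∀ a ∈ F, ∀ᶠ n in atTop, ‖(ψ⁻¹ * φ) a - ((Q n)⁻¹ * P n) a‖ < ε := fun a _ ↦ by
      have h : Tendsto (fun n ↦ (Q n).symm (P n a)) atTop (𝓝 (ψ.symm (φ a))) :=
        tendsto_starAlgEquiv_apply (P := fun n ↦ (Q n).symm) (hψ' (φ a)) (hφ a)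
      filter_upwards [Metric.tendsto_nhds.mp h ε hε] with n hn
      rw [dist_comm, dist_eq_norm] at hn
      exact hn
    obtain ⟨n, hn⟩ := ((Filter.eventually_all_finset F).mpr hlim).exists
    exact ⟨_, mul_mem (inv_mem (hQ n)) (hP n), hn⟩
  · rw [conjAction_mul, hconj, ← conjAction_mul, inv_mul_cancel, conjAction_one]

end Intertwining

section Main

open DoubleCentralizer

variable {A : Type*} [NonUnitalCStarAlgebra A]

theorem coe_mem_closure_isUnit_multiplier {a : A}
    (ha : (a : Unitization ℂ A) ∈ closure {x : Unitization ℂ A | IsUnit x}) :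
    (a : 𝓜(ℂ, A)) ∈ closure {x : 𝓜(ℂ, A) | IsUnit x} := by
  let φ : Unitization ℂ A →⋆ₐ[ℂ] 𝓜(ℂ, A) := Unitization.starLift coeHom
  have hφ : Continuous φ := (LipschitzWith.of_dist_le_mul (K := 1) fun x y ↦ by
    rw [dist_eq_norm, dist_eq_norm, ← map_sub, NNReal.coe_one, one_mul]
    exact NonUnitalStarAlgHom.norm_apply_le φ (x - y)).continuous
  have h := map_mem_closure (t := {x : 𝓜(ℂ, A) | IsUnit x}) hφ ha fun x hx ↦ IsUnit.map φ hx
  have hφa : φ (a : Unitization ℂ A) = (a : 𝓜(ℂ, A)) :=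
    DFunLike.congr_fun (Unitization.starLift.symm_apply_apply (coeHom : A →⋆ₙₐ[ℂ] 𝓜(ℂ, A))) a
  rwa [hφa] at h

variable {G : Type*} [Group G]

/-- An action given by a function to automorphisms, as a group homomorphism. -/
def actionHom (α : G → A ≃⋆ₐ[ℂ] A) (h1 : ∀ a : A, α 1 a = a)
    (hmul : ∀ (g h : G) (a : A), α (g * h) a = α g (α h a)) : G →* (A ≃⋆ₐ[ℂ] A) where
  toFun := α
  map_one' := StarAlgEquiv.ext h1
  map_mul' g h := StarAlgEquiv.ext (hmul g h)

theorem isRohlinTower_actionHom [PartialOrder A] [StarOrderedRing A] [Fintype G]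
    {α : G → A ≃⋆ₐ[ℂ] A} (hα1 : ∀ a : A, α 1 a = a)
    (hαmul : ∀ (g h : G) (a : A), α (g * h) a = α g (α h a)) {f : G → ℕ → A}
    (hf_pos : ∀ g n, 0 ≤ f g n)
    (hf_norm : ∀ g n, ‖f g n‖ ≤ 1)
    (hf_central : ∀ (a : A) (g : G),
      Tendsto (fun n => ‖f g n * a - a * f g n‖) atTop (𝓝 0))
    (hf_orth : ∀ (a : A) (g h : G), g ≠ h →
      Tendsto (fun n => ‖f g n * f h n * a‖) atTop (𝓝 0))
    (hf_idem : ∀ (a : A) (g : G),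
      Tendsto (fun n => ‖(f g n * f g n - f g n) * a‖) atTop (𝓝 0))
    (hf_sum : ∀ a : A,
      Tendsto (fun n => ‖(∑ k : G, f k n) * a - a‖) atTop (𝓝 0))
    (hf_equiv : ∀ (a : A) (g h : G),
      Tendsto (fun n => ‖(α g (f h n) - f (g * h) n) * a‖) atTop (𝓝 0)) :
    IsRohlinTower (actionHom α hα1 hαmul) f where
  star_eq k n := (hf_pos k n).isSelfAdjoint
  norm_le_one := hf_norm
  central a k := tendsto_zero_iff_norm_tendsto_zero.mpr (hf_central a k)
  orthogonal a j k hjk := tendsto_zero_iff_norm_tendsto_zero.mpr (hf_orth a j k hjk)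
  idempotent a k := by
    simpa only [sub_mul] using tendsto_zero_iff_norm_tendsto_zero.mpr (hf_idem a k)
  sum a := by
    simpa only [Finset.sum_mul] using tendsto_zero_iff_norm_tendsto_zero.mpr (hf_sum a)
  equivariant a g h := tendsto_zero_iff_norm_tendsto_zero.mpr (hf_equiv a g h)

end Main

/-- Theorem 3.5: Let `A` be a separable C*-algebra with `A ⊆ closure(GL(Ã))`, and let `α`, `β`
be actions of a finite group `G` on `A` with the Rohlin property (expressed via representing
sequences of positive contractions) such that `α_g` and `β_g` are approximately unitarily
equivalent for every `g`.  Then there is an approximately inner automorphism `θ` of `A` with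
`θ ∘ α_g ∘ θ⁻¹ = β_g` for every `g ∈ G`. -/
theorem rohlin_actions_conjugate
    {A : Type*} [NonUnitalCStarAlgebra A] [PartialOrder A] [StarOrderedRing A]
    [TopologicalSpace.SeparableSpace A]
    (hGL : ∀ a : A, (a : Unitization ℂ A) ∈ closure {x : Unitization ℂ A | IsUnit x})
    {G : Type*} [Group G] [Fintype G]
    (α β : G → A ≃⋆ₐ[ℂ] A)
    (hα1 : ∀ a : A, α 1 a = a)
    (hαmul : ∀ (g h : G) (a : A), α (g * h) a = α g (α h a))
    (hβ1 : ∀ a : A, β 1 a = a)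
    (hβmul : ∀ (g h : G) (a : A), β (g * h) a = β g (β h a))
    -- (1) `α_g` and `β_g` are approximately unitarily equivalent, via unitaries in `M(A)`
    (haue : ∀ (g : G) (F₁ : Finset A) (δ : ℝ), 0 < δ →
      ∃ u ∈ unitary 𝓜(ℂ, A), ∀ y ∈ F₁, ‖(star u).snd (u.fst (β g y)) - α g y‖ < δ)
    -- (2) `α` admits Rohlin sequences `(f_{g,n})_n` of positive contractions
    (f : G → ℕ → A)
    (hf_pos : ∀ g n, 0 ≤ f g n)
    (hf_norm : ∀ g n, ‖f g n‖ ≤ 1)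
    (hf_central : ∀ (a : A) (g : G),
      Tendsto (fun n => ‖f g n * a - a * f g n‖) atTop (𝓝 0))
    (hf_orth : ∀ (a : A) (g h : G), g ≠ h →
      Tendsto (fun n => ‖f g n * f h n * a‖) atTop (𝓝 0))
    (hf_idem : ∀ (a : A) (g : G),
      Tendsto (fun n => ‖(f g n * f g n - f g n) * a‖) atTop (𝓝 0))
    (hf_sum : ∀ a : A,
      Tendsto (fun n => ‖(∑ k : G, f k n) * a - a‖) atTop (𝓝 0))
    (hf_equiv : ∀ (a : A) (g h : G),
      Tendsto (fun n => ‖(α g (f h n) - f (g * h) n) * a‖) atTop (𝓝 0))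
    -- (2') `β` admits Rohlin sequences `(f'_{g,n})_n` of positive contractions
    (f' : G → ℕ → A)
    (hf'_pos : ∀ g n, 0 ≤ f' g n)
    (hf'_norm : ∀ g n, ‖f' g n‖ ≤ 1)
    (hf'_central : ∀ (a : A) (g : G),
      Tendsto (fun n => ‖f' g n * a - a * f' g n‖) atTop (𝓝 0))
    (hf'_orth : ∀ (a : A) (g h : G), g ≠ h →
      Tendsto (fun n => ‖f' g n * f' h n * a‖) atTop (𝓝 0))
    (hf'_idem : ∀ (a : A) (g : G),
      Tendsto (fun n => ‖(f' g n * f' g n - f' g n) * a‖) atTop (𝓝 0))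
    (hf'_sum : ∀ a : A,
      Tendsto (fun n => ‖(∑ k : G, f' k n) * a - a‖) atTop (𝓝 0))
    (hf'_equiv : ∀ (a : A) (g h : G),
      Tendsto (fun n => ‖(β g (f' h n) - f' (g * h) n) * a‖) atTop (𝓝 0)) :
    ∃ θ : A ≃⋆ₐ[ℂ] A,
      (∀ (F : Finset A) (ε : ℝ), 0 < ε →
        ∃ u ∈ unitary 𝓜(ℂ, A), ∀ a ∈ F, ‖θ a - (star u).snd (u.fst a)‖ < ε) ∧
      ∀ (g : G) (a : A), θ (α g (θ.symm a)) = β g a := by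
  obtain ⟨θ, hθ, hconj⟩ := (isRohlinTower_actionHom hα1 hαmul hf_pos hf_norm hf_central hf_orth
    hf_idem hf_sum hf_equiv).exists_conjAction_eq (isRohlinTower_actionHom hβ1 hβmul hf'_pos
    hf'_norm hf'_central hf'_orth hf'_idem hf'_sum hf'_equiv)
    (fun a ↦ coe_mem_closure_isUnit_multiplier (hGL a)) (fun g F δ hδ ↦ by
      obtain ⟨u, hu, hF⟩ := haue g F δ hδ
      exact ⟨DoubleCentralizer.innerAut ⟨u, hu⟩, ⟨_, rfl⟩, hF⟩)
  refine ⟨θ, fun F ε hε ↦ ?_, fun g a ↦ congrArg (fun γ : G →* (A ≃⋆ₐ[ℂ] A) ↦ γ g a) hconj⟩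
  obtain ⟨_, ⟨u, rfl⟩, hF⟩ := hθ F ε hε
  exact ⟨u, u.2, hF⟩
end

section
/- Let A be a C*-algebra, let G be a finite group, let {v_g}_{g∈G} be unitary elements of the multiplier algebra M(A), and for each g ∈ G let (f_{g,n})_{n∈ℕ} be a sequence of positive contractions in A such that for all a ∈ A and all g, h ∈ G: lim_n ‖f_{g,n}·a − a·f_{g,n}‖ = 0, lim_n ‖f_{g,n}·f_{h,n}·a‖ = 0 whenever g ≠ h, lim_n ‖(f_{g,n}² − f_{g,n})·a‖ = 0, and lim_n ‖(Σ_{k∈G} f_{k,n})·a − a‖ = 0. Set w_n := Σ_{g∈G} v_g·f_{g,n} ∈ A. Then lim_n ‖w_n*·w_n·a − a‖ = 0 for every a ∈ A. (The computation w*w·a = a for the element w = Σ_g v_g f_g of A^∞ carried out in the proof of Lemma 3.4 of the paper.) -/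
open scoped MultiplierAlgebra
open Filter Topology

namespace DoubleCentralizer

variable {A : Type*} [NonUnitalCStarAlgebra A]

/-- The left multiplication of a double centralizer is right `A`-linear. -/
theorem fst_apply_mul (u : 𝓜(ℂ, A)) (a b : A) : u.fst (a * b) = u.fst a * b := by
  have h (x : A) : x * (u.fst (a * b) - u.fst a * b) = 0 := by
    rw [mul_sub, ← u.central, ← mul_assoc x, ← u.central, mul_assoc, sub_self]
  exact sub_eq_zero.mp (CStarRing.star_mul_self_eq_zero_iff _ |>.mp (h _))

/-- The adjoint of a multiplier with respect to the `A`-valued inner product `star x * y`. -/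
theorem star_fst_apply_mul (u : 𝓜(ℂ, A)) (x y : A) :
    star (u.fst x) * y = star x * (star u).fst y := by
  apply star_injective
  rw [star_fst]
  simp [u.central]

end DoubleCentralizer

/-- If `f n` is bounded and `e n` is asymptotically central, then `e n` can be moved past a
multiplier sandwiched between `f n` and `e n * a`. -/
theorem tendsto_mul_fst_mul_sub {A : Type*} [NonUnitalCStarAlgebra A]
    (u : 𝓜(ℂ, A)) (f e : ℕ → A) (hf : ∀ n, ‖f n‖ ≤ 1)
    (he : ∀ a : A, Tendsto (fun n => ‖e n * a - a * e n‖) atTop (𝓝 0)) (a : A) :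
    Tendsto (fun n => f n * u.fst (e n * a) - f n * e n * u.fst a) atTop (𝓝 0) := by
  have hlim : Tendsto (fun n => ‖u.fst‖ * ‖e n * a - a * e n‖ +
      ‖e n * u.fst a - u.fst a * e n‖) atTop (𝓝 0) := by
    simpa using ((he a).const_mul ‖u.fst‖).add (he (u.fst a))
  refine squeeze_zero_norm (fun n => ?_) hlim
  have hsplit : f n * u.fst (e n * a) - f n * e n * u.fst a =
      f n * (u.fst (e n * a - a * e n) - (e n * u.fst a - u.fst a * e n)) := by
    rw [map_sub, u.fst_apply_mul a, mul_assoc, ← mul_sub]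
    congr 1
    abel
  rw [hsplit]
  calc
    _ ≤ ‖f n‖ * ‖u.fst (e n * a - a * e n) - (e n * u.fst a - u.fst a * e n)‖ := norm_mul_le _ _
    _ ≤ ‖u.fst (e n * a - a * e n) - (e n * u.fst a - u.fst a * e n)‖ :=
      mul_le_of_le_one_left (norm_nonneg _) (hf n)
    _ ≤ _ := (norm_sub_le _ _).trans (by gcongr; exact u.fst.le_opNorm _)

/-- The computation `w*w·a → a` from the proof of Lemma 3.4: if `{v_g}` are unitaries in the
multiplier algebra `M(A)` and `(f_{g,n})_n` are sequences of positive contractions in `A`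
which are asymptotically central, asymptotically mutually orthogonal, asymptotically
idempotent, and asymptotically sum to a unit, then `w_n = Σ_g v_g·f_{g,n}` satisfies
`lim_n ‖w_n* w_n a − a‖ = 0` for every `a ∈ A`. -/
theorem rohlin_sum_approximate_isometry
    {A : Type*} [NonUnitalCStarAlgebra A] [PartialOrder A] [StarOrderedRing A]
    {G : Type*} [Group G] [Fintype G]
    (v : G → 𝓜(ℂ, A)) (hv : ∀ g, v g ∈ unitary 𝓜(ℂ, A))
    (f : G → ℕ → A)
    (hf_pos : ∀ g n, 0 ≤ f g n)
    (hf_norm : ∀ g n, ‖f g n‖ ≤ 1)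
    (hf_central : ∀ (a : A) (g : G),
      Tendsto (fun n => ‖f g n * a - a * f g n‖) atTop (𝓝 0))
    (hf_orth : ∀ (a : A) (g h : G), g ≠ h →
      Tendsto (fun n => ‖f g n * f h n * a‖) atTop (𝓝 0))
    (hf_idem : ∀ (a : A) (g : G),
      Tendsto (fun n => ‖(f g n * f g n - f g n) * a‖) atTop (𝓝 0))
    (hf_sum : ∀ a : A,
      Tendsto (fun n => ‖(∑ k : G, f k n) * a - a‖) atTop (𝓝 0))
    (w : ℕ → A)
    (hw : ∀ n, w n = ∑ g : G, (v g).fst (f g n)) :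
    ∀ a : A, Tendsto (fun n => ‖star (w n) * w n * a - a‖) atTop (𝓝 0) := by
  intro a
  classical
  have hterm (g h : G) : Tendsto (fun n => star ((v g).fst (f g n)) * (v h).fst (f h n) * a -
      if g = h then f g n * a else 0) atTop (𝓝 0) := by
    have hmove := tendsto_mul_fst_mul_sub (star (v g) * v h) (f g) (f h) (hf_norm g)
      (fun b => hf_central b h) a
    have hrw (n : ℕ) : star ((v g).fst (f g n)) * (v h).fst (f h n) * a =
        f g n * (star (v g) * v h).fst (f h n * a) := by
      rw [mul_assoc, ← DoubleCentralizer.fst_apply_mul, DoubleCentralizer.star_fst_apply_mul,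
        (IsSelfAdjoint.of_nonneg (hf_pos g n)).star_eq]
      rfl
    simp only [hrw]
    rcases eq_or_ne g h with rfl | hgh
    · have hunit : (star (v g) * v g).fst a = a := by
        rw [Unitary.star_mul_self_of_mem (hv g)]
        rfl
      have hidem := tendsto_zero_iff_norm_tendsto_zero.mpr (hf_idem a g)
      rw [hunit] at hmove
      simpa [sub_mul] using hmove.add hidem
    · have horth := tendsto_zero_iff_norm_tendsto_zero.mpr
        (hf_orth ((star (v g) * v h).fst a) g h hgh)
      simpa [hgh] using hmove.add horth
  have hsum := tendsto_finsetSum Finset.univ fun h _ =>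
    tendsto_finsetSum Finset.univ fun g _ => hterm g h
  have htotal := hsum.add (tendsto_zero_iff_norm_tendsto_zero.mpr (hf_sum a))
  rw [← tendsto_zero_iff_norm_tendsto_zero]
  simpa [hw, star_sum, Finset.sum_mul, Finset.mul_sum, Finset.sum_sub_distrib] using htotal
end
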